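/- arXiv:2311.06085 — 2 statements merged into one kernel-verified Lean document; each statement's English description precedes it below -/
import Mathlib

section
/- Let G = (V,E) be a trivially perfect finite simple graph with node weights c ∈ ℤ^V, let Γ be the group of automorphisms of G that preserve c, let L = (ℓ_1,…,ℓ_k) be a sequence of distinct leaders with stabilizer-chain orbits O_i such that the SST cuts S = S(L) are stringent, and let D be the set of nodes removed by the deletion operation (V_0 = V, D_i = {v ∈ V_{i−1} ∩ O_i : {v,ℓ_i} ∈ E}, V_i = V_{i−1} \ D_i, D = ∪_i D_i). Then P(G,S) is exactly the set of x ∈ ℝ^V satisfying: 0 ≤ x_v ≤ 1 for all v ∈ V; Σ_{v∈C} x_v ≤ 1 for every maximal clique C of G; Σ_{f∈C} x_f ≤ x_{ℓ_i} for every i and every clique C of G with C ⊆ O_i \ {ℓ_i}; and x_v = 0 for every v ∈ D. -/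
open Finset

/-- A finite simple graph is trivially perfect: it has an interval representation by
pairwise distinct nonempty closed intervals that forms a laminar family. -/
def TriviallyPerfect {V : Type*} (G : SimpleGraph V) : Prop :=
  ∃ I : V → Set ℝ,
    (∀ v, ∃ a b : ℝ, a ≤ b ∧ I v = Set.Icc a b) ∧
    (∀ v w, v ≠ w → I v ≠ I w) ∧
    (∀ v w, v ≠ w → (G.Adj v w ↔ (I v ∩ I w).Nonempty)) ∧
    (∀ v w, (I v ∩ I w).Nonempty → I v ⊆ I w ∨ I w ⊆ I v)

/-- The stabilizer chain: `sstChain Γ ℓ 0 = Γ` and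
`sstChain Γ ℓ (i+1)` is the pointwise stabilizer of `ℓ i` inside `sstChain Γ ℓ i`. -/
def sstChain {α : Type*} (Γ : Set (Equiv.Perm α)) (ℓ : ℕ → α) : ℕ → Set (Equiv.Perm α)
  | 0 => Γ
  | i + 1 => {γ ∈ sstChain Γ ℓ i | γ (ℓ i) = ℓ i}

/-- The orbit `O_i` of the leader `ℓ i` under the `i`-th group of the stabilizer chain. -/
def sstOrbit {α : Type*} (Γ : Set (Equiv.Perm α)) (ℓ : ℕ → α) (i : ℕ) : Set α :=
  (fun γ : Equiv.Perm α => γ (ℓ i)) '' sstChain Γ ℓ i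

/-- The leader sequence is stringent: each leader `ℓ i` is chosen from
`𝔒'_i = (O_0 ∪ … ∪ O_{i-1}) \ {ℓ_0, …, ℓ_{i-1}}` whenever this set is nonempty. -/
def sstStringent {α : Type*} (Γ : Set (Equiv.Perm α)) (ℓ : ℕ → α) (k : ℕ) : Prop :=
  ∀ i < k,
    ((⋃ j < i, sstOrbit Γ ℓ j) \ {v | ∃ j < i, ℓ j = v}).Nonempty →
    ℓ i ∈ (⋃ j < i, sstOrbit Γ ℓ j) \ {v | ∃ j < i, ℓ j = v}

/-- The group of all automorphisms of `G` preserving the node weights `c`. -/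
def autSet {V : Type*} (G : SimpleGraph V) (c : V → ℤ) : Set (Equiv.Perm V) :=
  {γ | (∀ u v, G.Adj (γ u) (γ v) ↔ G.Adj u v) ∧ ∀ v, c (γ v) = c v}

/-- The node sets `V_i` of the deletion operation: `V_0 = V` and
`V_i = V_{i-1} \ D_i` where `D_i` are the nodes of `V_{i-1} ∩ O_i` adjacent to `ℓ i`. -/
def sstKeep {V : Type*} (G : SimpleGraph V) (Γ : Set (Equiv.Perm V)) (ℓ : ℕ → V) :
    ℕ → Set V
  | 0 => Set.univ
  | i + 1 => sstKeep G Γ ℓ i \ {v | v ∈ sstOrbit Γ ℓ i ∧ G.Adj v (ℓ i)}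

/-- The set `D = D_1 ∪ … ∪ D_k` of nodes removed by the deletion operation. -/
def sstDeleted {V : Type*} (G : SimpleGraph V) (Γ : Set (Equiv.Perm V)) (ℓ : ℕ → V)
    (k : ℕ) : Set V :=
  {v | ∃ i < k, v ∈ sstKeep G Γ ℓ i ∧ v ∈ sstOrbit Γ ℓ i ∧ G.Adj v (ℓ i)}


/-- The SST cuts `S(L)`: pairs `(ℓ i, f)` with `f ∈ O_i \ {ℓ i}`, for `i < k`. -/
def sstCuts {α : Type*} (Γ : Set (Equiv.Perm α)) (ℓ : ℕ → α) (k : ℕ) : Set (α × α) :=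
  {p | ∃ i < k, p.1 = ℓ i ∧ p.2 ∈ sstOrbit Γ ℓ i ∧ p.2 ≠ ℓ i}

/-- `I` is a stable set of `G`. -/
def IsStableSet {V : Type*} (G : SimpleGraph V) (I : Finset V) : Prop :=
  ∀ u ∈ I, ∀ v ∈ I, ¬ G.Adj u v

/-- The indicator vector of a finite node set. -/
def indic {V : Type*} [DecidableEq V] (I : Finset V) : V → ℝ :=
  fun v => if v ∈ I then 1 else 0

/-- `P(G,S)`: the convex hull of the indicator vectors of stable sets satisfying
all the SST cuts in `S`. -/
def sstPolytope {V : Type*} [DecidableEq V] (G : SimpleGraph V) (S : Set (V × V)) :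
    Set (V → ℝ) :=
  convexHull ℝ
    {x | ∃ I : Finset V, IsStableSet G I ∧ x = indic I ∧ ∀ p ∈ S, x p.2 ≤ x p.1}

/-!
Give every node `v` an interval `[s v, s v + x v)` inside `[0, 1)` such that adjacent nodes get
disjoint intervals and, for each SST cut `(ℓ_i, f)` with `x_f > 0`, the interval of `f` lies in that
of `ℓ_i`. Then for each `θ ∈ [0, 1)` the nodes whose interval contains `θ` form a stable set
satisfying the cuts, and `x` is the average of these stable sets over `θ`.

Adjacent nodes of a trivially perfect graph have comparable closed neighborhoods, so `G` is the
comparability graph of a forest order, and so it is of any transitive reorientation of that order.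
Take `s v` to be the largest weight of a chain below `v` in the reorientation that puts the nodes of
the orbits `O_i` that are not cliques first, from the roots downwards. For such a node, `s v` is the
weight of the nodes of these orbits that dominate `v`. By stringency, two orbits either lie in a
common `Γ`-orbit or the later stabilizer fixes the earlier orbit pointwise; hence all members of
`O_i` have the same strict dominators among these nodes, and what remains of `s f` is the weight of
twins of `f` in `O_i`, which the SST clique cut controls.
-/

section ChainHeight

variable {V : Type*} [Fintype V] {r : V → V → Prop} {x : V → ℝ} {C : Finset V} {u v : V}

open scoped Classical in
/-- The `r`-chains all of whose members are `r`-below `v`. -/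
noncomputable def chainsBelow (r : V → V → Prop) (v : V) : Finset (Finset V) :=
  {C | IsChain r (C : Set V) ∧ ∀ u ∈ C, r u v}

theorem mem_chainsBelow : C ∈ chainsBelow r v ↔ IsChain r (C : Set V) ∧ ∀ u ∈ C, r u v := by
  simp [chainsBelow]

theorem empty_mem_chainsBelow : ∅ ∈ chainsBelow r v := by
  simp [mem_chainsBelow]

/-- The largest `x`-weight of an `r`-chain strictly below `v`: the earliest position at which the
interval of `v` can start if every element has to come after all elements `r`-below it. -/
noncomputable def chainHeight (r : V → V → Prop) (x : V → ℝ) (v : V) : ℝ :=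
  (chainsBelow r v).sup' ⟨∅, empty_mem_chainsBelow⟩ fun C => ∑ u ∈ C, x u

theorem sum_le_chainHeight (hC : C ∈ chainsBelow r v) : ∑ u ∈ C, x u ≤ chainHeight r x v :=
  le_sup' (fun C => ∑ u ∈ C, x u) hC

theorem exists_chainsBelow_sum_eq_chainHeight (r : V → V → Prop) (x : V → ℝ) (v : V) :
    ∃ C ∈ chainsBelow r v, chainHeight r x v = ∑ u ∈ C, x u :=
  exists_mem_eq_sup' _ _

theorem chainHeight_nonneg (r : V → V → Prop) (x : V → ℝ) (v : V) : 0 ≤ chainHeight r x v := by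
  simpa using sum_le_chainHeight (x := x) (empty_mem_chainsBelow (r := r) (v := v))

theorem exists_isChain_sum_eq_chainHeight_add [DecidableEq V] [Std.Irrefl r] (x : V → ℝ) (v : V) :
    ∃ C ∈ chainsBelow r v, IsChain r (↑(insert v C) : Set V) ∧
      ∑ u ∈ insert v C, x u = chainHeight r x v + x v := by
  obtain ⟨C, hC, hsum⟩ := exists_chainsBelow_sum_eq_chainHeight r x v
  obtain ⟨hchain, hbelow⟩ := mem_chainsBelow.1 hC
  refine ⟨C, hC, ?_, ?_⟩
  · rw [coe_insert]
    exact hchain.insert fun b hb _ => .inr (hbelow b hb)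
  · rw [sum_insert fun hv => irrefl_of r v (hbelow v hv), hsum, add_comm]

theorem chainHeight_add_le [Std.Irrefl r] {b : ℝ}
    (hb : ∀ C : Finset V, IsChain r (C : Set V) → ∑ u ∈ C, x u ≤ b) (v : V) :
    chainHeight r x v + x v ≤ b := by
  classical
  obtain ⟨C, -, hchain, hsum⟩ := exists_isChain_sum_eq_chainHeight_add (r := r) x v
  exact hsum ▸ hb _ hchain

theorem chainHeight_add_le_chainHeight [IsStrictOrder V r] (huv : r u v) :
    chainHeight r x u + x u ≤ chainHeight r x v := by
  classical
  obtain ⟨C, hC, hchain, hsum⟩ := exists_isChain_sum_eq_chainHeight_add (r := r) x u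
  refine hsum ▸ sum_le_chainHeight (mem_chainsBelow.2 ⟨hchain, fun w hw => ?_⟩)
  rcases mem_insert.1 hw with rfl | hw
  · exact huv
  · exact trans_of r ((mem_chainsBelow.1 hC).2 w hw) huv

theorem chainHeight_eq_sum_of_isChain (hx : ∀ v, 0 ≤ x v) (hC : IsChain r (C : Set V))
    (hmem : ∀ u, u ∈ C ↔ r u v) : chainHeight r x v = ∑ u ∈ C, x u := by
  refine le_antisymm ?_ (sum_le_chainHeight (mem_chainsBelow.2 ⟨hC, fun u => (hmem u).1⟩))
  obtain ⟨B, hB, hsum⟩ := exists_chainsBelow_sum_eq_chainHeight r x v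
  rw [hsum]
  exact sum_le_sum_of_subset_of_nonneg (fun u hu => (hmem u).2 ((mem_chainsBelow.1 hB).2 u hu))
    fun u _ _ => hx u

end ChainHeight

section ForestOrder

variable {V : Type*} {r : V → V → Prop} {A : Set V} {u v : V}

/-- `r u v` reads "`u` is a proper ancestor of `v`" in a rooted forest: a strict order in which the
ancestors of each node form a chain. -/
class IsForestOrder (r : V → V → Prop) : Prop extends IsStrictOrder V r where
  isChain_ancestors : ∀ v, IsChain r {u | r u v}

/-- The reorientation of a forest order in which related nodes of `A` come top-down, related nodes
outside `A` bottom-up, and nodes of `A` precede all related nodes outside `A`. -/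
def priorityOrder (r : V → V → Prop) (A : Set V) (u v : V) : Prop :=
  u ∈ A ∧ r u v ∨ v ∉ A ∧ r v u

theorem priorityOrder_or_swap_iff :
    priorityOrder r A u v ∨ priorityOrder r A v u ↔ r u v ∨ r v u := by
  unfold priorityOrder
  tauto

theorem priorityOrder_iff_of_mem (hv : v ∈ A) : priorityOrder r A u v ↔ u ∈ A ∧ r u v := by
  simp [priorityOrder, hv]

theorem isChain_priorityOrder_iff {s : Set V} : IsChain (priorityOrder r A) s ↔ IsChain r s := by
  simp only [IsChain, Set.Pairwise, priorityOrder_or_swap_iff]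

instance priorityOrder.isStrictOrder [IsForestOrder r] : IsStrictOrder V (priorityOrder r A) where
  irrefl u hu := by
    rcases hu with ⟨-, hu⟩ | ⟨-, hu⟩ <;> exact irrefl_of r u hu
  trans u v w huv hvw := by
    rcases huv with ⟨hu, huv⟩ | ⟨hv, hvu⟩ <;> rcases hvw with ⟨hv', hvw⟩ | ⟨hw, hwv⟩
    · exact .inl ⟨hu, trans_of r huv hvw⟩
    · have hne : u ≠ w := fun h => hw (h ▸ hu)
      exact (IsForestOrder.isChain_ancestors v huv hwv hne).imp (⟨hu, ·⟩) (⟨hw, ·⟩)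
    · exact absurd hv' hv
    · exact .inr ⟨hw, trans_of r hwv hvu⟩

theorem chainHeight_priorityOrder_of_mem [Fintype V] [IsForestOrder r] [DecidablePred (· ∈ A)]
    [DecidableRel r] {x : V → ℝ} (hx : ∀ v, 0 ≤ x v) (hv : v ∈ A) :
    chainHeight (priorityOrder r A) x v = ∑ u with u ∈ A ∧ r u v, x u := by
  refine chainHeight_eq_sum_of_isChain hx ?_ fun u => by simp [priorityOrder_iff_of_mem hv]
  rw [isChain_priorityOrder_iff]
  exact (IsForestOrder.isChain_ancestors v).mono fun u hu => (mem_filter.1 hu).2.2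

end ForestOrder

section Rounding

open MeasureTheory

variable {V : Type*} [Fintype V] {s x : V → ℝ}

/-- The nodes `v` whose half-open interval `[s v, s v + x v)` contains `θ`. -/
noncomputable def levelSet (s x : V → ℝ) (θ : ℝ) : Finset V :=
  {v | θ ∈ Set.Ico (s v) (s v + x v)}

theorem mem_levelSet {θ : ℝ} {v : V} : v ∈ levelSet s x θ ↔ θ ∈ Set.Ico (s v) (s v + x v) := by
  simp [levelSet]

variable [DecidableEq V]

theorem indic_levelSet_apply (s x : V → ℝ) (θ : ℝ) (v : V) :
    indic (levelSet s x θ) v = (Set.Ico (s v) (s v + x v)).indicator (fun _ => 1) θ := by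
  simp only [indic, mem_levelSet, Set.indicator_apply]

theorem setIntegral_Ico_indic_levelSet {v : V} (hx : 0 ≤ x v) (hs : 0 ≤ s v)
    (hsx : s v + x v ≤ 1) : ∫ θ in Set.Ico (0 : ℝ) 1, indic (levelSet s x θ) v = x v := by
  simp only [indic_levelSet_apply]
  rw [setIntegral_indicator measurableSet_Ico,
    Set.inter_eq_right.2 (Set.Ico_subset_Ico hs hsx)]
  simp [hx]

/-- Integrating over a uniform `θ ∈ [0, 1)` exhibits `x` as the average of its level sets. -/
theorem mem_convexHull_of_forall_indic_levelSet_mem (hx : ∀ v, 0 ≤ x v) (hs : ∀ v, 0 ≤ s v)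
    (hsx : ∀ v, s v + x v ≤ 1) {T : Set (V → ℝ)} (hT : ∀ θ, indic (levelSet s x θ) ∈ T) :
    x ∈ convexHull ℝ T := by
  let μ : Measure ℝ := volume.restrict (Set.Ico 0 1)
  have : IsProbabilityMeasure μ := ⟨by simp [μ]⟩
  have hint (v : V) : Integrable (fun θ => indic (levelSet s x θ) v) μ := by
    simp only [indic_levelSet_apply]
    exact (integrable_const 1).indicator measurableSet_Ico
  have hfin : (T ∩ Set.range indic).Finite := (Set.finite_range indic).inter_of_right T
  have havg : ∫ θ, indic (levelSet s x θ) ∂μ ∈ convexHull ℝ (T ∩ Set.range indic) :=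
    (convex_convexHull ℝ _).integral_mem (hfin.isClosed_convexHull ℝ)
      (.of_forall fun θ => subset_convexHull ℝ _ ⟨hT θ, _, rfl⟩) (.of_eval hint)
  have hxavg : ∫ θ, indic (levelSet s x θ) ∂μ = x := by
    ext v
    rw [eval_integral hint]
    exact setIntegral_Ico_indic_levelSet (hx v) (hs v) (hsx v)
  exact convexHull_mono Set.inter_subset_left (hxavg ▸ havg)

end Rounding

section ClosedNeighborhoods

variable {V : Type*} {G : SimpleGraph V} {u v w : V}

/-- The closed neighborhood `N[v]`. Nodes with equal closed neighborhoods are called twins. -/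
def closedNbhd (G : SimpleGraph V) (v : V) : Set V :=
  insert v (G.neighborSet v)

theorem mem_closedNbhd : w ∈ closedNbhd G v ↔ w = v ∨ G.Adj v w := Iff.rfl

theorem self_mem_closedNbhd : v ∈ closedNbhd G v := .inl rfl

theorem mem_closedNbhd_comm : w ∈ closedNbhd G v ↔ v ∈ closedNbhd G w := by
  rw [mem_closedNbhd, mem_closedNbhd, eq_comm, G.adj_comm]

theorem adj_of_closedNbhd_subset (h : closedNbhd G u ⊆ closedNbhd G v) (hne : u ≠ v) :
    G.Adj u v :=
  ((h self_mem_closedNbhd).resolve_left hne).symm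

theorem adj_of_closedNbhd_subset_of_subset (hu : closedNbhd G w ⊆ closedNbhd G u)
    (hv : closedNbhd G w ⊆ closedNbhd G v) (hne : u ≠ v) : G.Adj u v := by
  have hvu : v ∈ closedNbhd G u := hu (mem_closedNbhd_comm.1 (hv self_mem_closedNbhd))
  exact hvu.resolve_left hne.symm

theorem closedNbhd_apply {γ : Equiv.Perm V} (hγ : ∀ u v, G.Adj (γ u) (γ v) ↔ G.Adj u v) (v : V) :
    closedNbhd G (γ v) = γ '' closedNbhd G v := by
  ext w
  obtain ⟨w, rfl⟩ := γ.surjective w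
  simp [mem_closedNbhd, hγ]

theorem adj_swap_iff_of_twins [DecidableEq V] (h : closedNbhd G u = closedNbhd G v) (a b : V) :
    G.Adj (Equiv.swap u v a) (Equiv.swap u v b) ↔ G.Adj a b := by
  have adj_iff (w : V) (hu : w ≠ u) (hv : w ≠ v) : G.Adj u w ↔ G.Adj v w := by
    simpa [mem_closedNbhd, hu, hv] using Set.ext_iff.1 h w
  simp only [Equiv.swap_apply_def]
  grind [G.adj_comm, G.irrefl]

/-- Adjacent nodes have comparable closed neighborhoods. -/
def HasNestedNbhds (G : SimpleGraph V) : Prop :=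
  ∀ ⦃u v⦄, G.Adj u v → closedNbhd G u ⊆ closedNbhd G v ∨ closedNbhd G v ⊆ closedNbhd G u

theorem TriviallyPerfect.hasNestedNbhds (hG : TriviallyPerfect G) : HasNestedNbhds G := by
  obtain ⟨I, -, -, adj_iff, laminar⟩ := hG
  have nbhd_mono {u v : V} (huv : G.Adj u v) (hI : I u ⊆ I v) :
      closedNbhd G u ⊆ closedNbhd G v := by
    rintro w (rfl | huw)
    · exact .inr huv.symm
    · refine or_iff_not_imp_left.2 fun hwv => (adj_iff v w (Ne.symm hwv)).2 ?_
      exact ((adj_iff u w huw.ne).1 huw).mono (Set.inter_subset_inter_left _ hI)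
  intro u v huv
  exact (laminar u v ((adj_iff u v huv.ne).1 huv)).imp (nbhd_mono huv) (nbhd_mono huv.symm)

end ClosedNeighborhoods

section Outranks

variable {V : Type*} {G : SimpleGraph V} {e : V → ℕ} {u v : V}

/-- `u` has a larger closed neighborhood than `v`, or it is a twin of `v` with a smaller label.
If closed neighborhoods are nested, this is a forest order whose comparability graph is `G`. -/
def Outranks (G : SimpleGraph V) (e : V → ℕ) (u v : V) : Prop :=
  closedNbhd G v ⊂ closedNbhd G u ∨ closedNbhd G u = closedNbhd G v ∧ e u < e v

theorem Outranks.closedNbhd_subset (h : Outranks G e u v) : closedNbhd G v ⊆ closedNbhd G u :=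
  h.elim (·.subset) (·.1.superset)

theorem Outranks.irrefl (G : SimpleGraph V) (e : V → ℕ) (u : V) : ¬ Outranks G e u u := by
  rintro (h | h)
  · exact h.ne rfl
  · exact h.2.false

theorem Outranks.adj (h : Outranks G e u v) : G.Adj u v :=
  (adj_of_closedNbhd_subset h.closedNbhd_subset fun hvu =>
    Outranks.irrefl G e u (hvu ▸ h)).symm

theorem adj_iff_outranks (hG : HasNestedNbhds G) (he : Function.Injective e) :
    G.Adj u v ↔ Outranks G e u v ∨ Outranks G e v u := by
  refine ⟨fun huv => ?_, fun h => h.elim (·.adj) (·.adj.symm)⟩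
  by_cases htwins : closedNbhd G u = closedNbhd G v
  · exact (he.ne huv.ne).lt_or_gt.imp (fun h => .inr ⟨htwins, h⟩) fun h => .inr ⟨htwins.symm, h⟩
  · exact (hG huv).symm.imp (fun h => .inl (h.ssubset_of_ne (Ne.symm htwins)))
      fun h => .inl (h.ssubset_of_ne htwins)

theorem Outranks.trans {w : V} (huv : Outranks G e u v) (hvw : Outranks G e v w) :
    Outranks G e u w := by
  rcases huv with huv | ⟨huv, heuv⟩ <;> rcases hvw with hvw | ⟨hvw, hevw⟩
  · exact .inl (hvw.trans huv)
  · exact .inl (hvw ▸ huv)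
  · exact .inl (huv ▸ hvw)
  · exact .inr ⟨huv.trans hvw, heuv.trans hevw⟩

theorem isForestOrder_outranks (hG : HasNestedNbhds G) (he : Function.Injective e) :
    IsForestOrder (Outranks G e) where
  irrefl := Outranks.irrefl G e
  trans _ _ _ := Outranks.trans
  isChain_ancestors _ _ hu _ hv hne := (adj_iff_outranks hG he).1
    (adj_of_closedNbhd_subset_of_subset hu.closedNbhd_subset hv.closedNbhd_subset hne)

theorem isChain_outranks_iff (hG : HasNestedNbhds G) (he : Function.Injective e) {C : Set V} :
    IsChain (Outranks G e) C ↔ G.IsClique C := by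
  simp only [IsChain, SimpleGraph.isClique_iff, Set.Pairwise, adj_iff_outranks hG he]

end Outranks

section Packing

variable {V : Type*} [Fintype V] {G : SimpleGraph V} {e : V → ℕ} {A : Set V} {x : V → ℝ} {v : V}

open scoped Classical in
/-- The nodes of `A` whose closed neighborhood properly contains that of `v`. -/
noncomputable def strictDominators (G : SimpleGraph V) (A : Set V) (v : V) : Finset V :=
  {u | u ∈ A ∧ closedNbhd G v ⊂ closedNbhd G u}

open scoped Classical in
/-- The twins of `v` in `A` whose label is smaller than that of `v`. -/
noncomputable def earlierTwins (G : SimpleGraph V) (e : V → ℕ) (A : Set V) (v : V) : Finset V :=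
  {u | u ∈ A ∧ closedNbhd G u = closedNbhd G v ∧ e u < e v}

theorem mem_strictDominators {u : V} :
    u ∈ strictDominators G A v ↔ u ∈ A ∧ closedNbhd G v ⊂ closedNbhd G u := by
  simp [strictDominators]

theorem mem_earlierTwins {u : V} :
    u ∈ earlierTwins G e A v ↔ u ∈ A ∧ closedNbhd G u = closedNbhd G v ∧ e u < e v := by
  simp [earlierTwins]

theorem isClique_insert_earlierTwins [DecidableEq V] :
    G.IsClique (↑(insert v (earlierTwins G e A v)) : Set V) := by
  have twins {u : V} (hu : u ∈ insert v (earlierTwins G e A v)) :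
      closedNbhd G u = closedNbhd G v := by
    rcases mem_insert.1 hu with rfl | hu
    · rfl
    · exact (mem_earlierTwins.1 hu).2.1
  exact fun a ha b hb => adj_of_closedNbhd_subset ((twins ha).trans (twins hb).symm).subset

/-- The starting position of the interval `[s v, s v + x v)` assigned to the node `v` when the
nodes of `A` are packed first. -/
noncomputable def packing (G : SimpleGraph V) (e : V → ℕ) (A : Set V) (x : V → ℝ) (v : V) : ℝ :=
  chainHeight (priorityOrder (Outranks G e) A) x v

theorem packing_nonneg (v : V) : 0 ≤ packing G e A x v :=
  chainHeight_nonneg _ _ _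

theorem packing_add_le_one (hG : HasNestedNbhds G) (he : Function.Injective e)
    (hx : ∀ C : Finset V, G.IsClique (C : Set V) → ∑ u ∈ C, x u ≤ 1) (v : V) :
    packing G e A x v + x v ≤ 1 := by
  have := isForestOrder_outranks hG he
  refine chainHeight_add_le (fun C hC => hx C ?_) v
  rwa [isChain_priorityOrder_iff, isChain_outranks_iff hG he] at hC

theorem packing_add_le_packing_of_adj (hG : HasNestedNbhds G) (he : Function.Injective e) {u v : V}
    (huv : G.Adj u v) :
    packing G e A x u + x u ≤ packing G e A x v ∨
      packing G e A x v + x v ≤ packing G e A x u := by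
  have := isForestOrder_outranks hG he
  rw [adj_iff_outranks hG he, ← priorityOrder_or_swap_iff (A := A)] at huv
  exact huv.imp chainHeight_add_le_chainHeight chainHeight_add_le_chainHeight

theorem packing_eq_of_mem (hG : HasNestedNbhds G) (he : Function.Injective e) (hx : ∀ v, 0 ≤ x v)
    (hv : v ∈ A) :
    packing G e A x v =
      ∑ u ∈ strictDominators G A v, x u + ∑ u ∈ earlierTwins G e A v, x u := by
  classical
  have := isForestOrder_outranks hG he
  have hdisj : Disjoint (strictDominators G A v) (earlierTwins G e A v) :=
    Finset.disjoint_left.2 fun u hu hu' =>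
      (mem_strictDominators.1 hu).2.ne (mem_earlierTwins.1 hu').2.1.symm
  rw [packing, chainHeight_priorityOrder_of_mem hx hv, ← sum_union hdisj]
  congr 1
  ext u
  rw [mem_filter_univ, mem_union, mem_strictDominators, mem_earlierTwins, Outranks, and_or_left]

theorem isStableSet_levelSet_packing (hG : HasNestedNbhds G) (he : Function.Injective e) (θ : ℝ) :
    IsStableSet G (levelSet (packing G e A x) x θ) := by
  intro u hu v hv huv
  obtain ⟨hu₁, hu₂⟩ := mem_levelSet.1 hu
  obtain ⟨hv₁, hv₂⟩ := mem_levelSet.1 hv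
  rcases packing_add_le_packing_of_adj (A := A) (x := x) hG he huv with h | h <;> linarith

end Packing

section StabilizerChain

variable {α : Type*} {Γ : Subgroup (Equiv.Perm α)} {ℓ : ℕ → α} {i j k : ℕ} {p q : α}

theorem mem_sstChain_iff {Γ : Set (Equiv.Perm α)} {γ : Equiv.Perm α} :
    γ ∈ sstChain Γ ℓ i ↔ γ ∈ Γ ∧ ∀ j < i, γ (ℓ j) = ℓ j := by
  induction i with
  | zero => simp [sstChain]
  | succ i ih => simp only [sstChain, Set.mem_ofPred_eq, ih, Nat.forall_lt_succ_right, and_assoc]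

theorem sstChain_eq_inf_fixingSubgroup (Γ : Subgroup (Equiv.Perm α)) (ℓ : ℕ → α) (i : ℕ) :
    sstChain (Γ : Set (Equiv.Perm α)) ℓ i =
      (Γ ⊓ fixingSubgroup (Equiv.Perm α) (ℓ '' Set.Iio i) : Subgroup (Equiv.Perm α)) := by
  ext γ
  simp [mem_sstChain_iff, mem_fixingSubgroup_iff]

theorem apply_eq_self_of_mem_sstChain {γ : Equiv.Perm α} (hγ : γ ∈ sstChain (Γ : Set _) ℓ i)
    (hp : p ∈ ℓ '' Set.Iio i) : γ p = p := by
  obtain ⟨j, hj, rfl⟩ := hp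
  exact (mem_sstChain_iff.1 hγ).2 j hj

theorem leader_mem_sstOrbit (Γ : Subgroup (Equiv.Perm α)) (ℓ : ℕ → α) (i : ℕ) :
    ℓ i ∈ sstOrbit (Γ : Set (Equiv.Perm α)) ℓ i :=
  ⟨1, by rw [sstChain_eq_inf_fixingSubgroup]; exact one_mem _, rfl⟩

theorem apply_mem_sstOrbit {γ : Equiv.Perm α} (hγ : γ ∈ sstChain (Γ : Set _) ℓ i)
    (hp : p ∈ sstOrbit (Γ : Set _) ℓ i) : γ p ∈ sstOrbit (Γ : Set _) ℓ i := by
  obtain ⟨τ, hτ, rfl⟩ := hp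
  rw [sstChain_eq_inf_fixingSubgroup] at hγ hτ
  refine ⟨γ * τ, ?_, rfl⟩
  rw [sstChain_eq_inf_fixingSubgroup]
  exact mul_mem hγ hτ

theorem exists_mem_sstChain_apply_eq (hp : p ∈ sstOrbit (Γ : Set _) ℓ i)
    (hq : q ∈ sstOrbit (Γ : Set _) ℓ i) : ∃ γ ∈ sstChain (Γ : Set _) ℓ i, γ p = q := by
  obtain ⟨σ, hσ, rfl⟩ := hp
  obtain ⟨τ, hτ, rfl⟩ := hq
  rw [sstChain_eq_inf_fixingSubgroup] at hσ hτ ⊢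
  exact ⟨τ * σ⁻¹, mul_mem hτ (inv_mem hσ), by simp⟩

theorem mem_orbit_of_mem_sstOrbit (hp : p ∈ sstOrbit (Γ : Set _) ℓ i) :
    p ∈ MulAction.orbit Γ (ℓ i) := by
  obtain ⟨γ, hγ, rfl⟩ := hp
  exact ⟨⟨γ, (mem_sstChain_iff.1 hγ).1⟩, rfl⟩

theorem notMem_earlier_leaders_of_ne (hp : p ∈ sstOrbit (Γ : Set _) ℓ i)
    (hq : q ∈ sstOrbit (Γ : Set _) ℓ i) (hpq : p ≠ q) : p ∉ ℓ '' Set.Iio i := fun hleader => by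
  obtain ⟨γ, hγ, rfl⟩ := exists_mem_sstChain_apply_eq hp hq
  exact hpq (apply_eq_self_of_mem_sstChain hγ hleader).symm

/-- An orbit `O_i` that is not exhausted by the leaders before `j` forces, by stringency, all
leaders between `i` and `j` to be picked from earlier orbits. -/
theorem leader_mem_orbit_or_sstOrbit_subset_of_stringent
    (hstr : sstStringent (Γ : Set (Equiv.Perm α)) ℓ k) (hij : i ≤ j) (hj : j < k) :
    ℓ j ∈ MulAction.orbit Γ (ℓ i) ∨ sstOrbit (Γ : Set _) ℓ i ⊆ ℓ '' Set.Iio j := by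
  induction j using Nat.strong_induction_on generalizing i with | _ j ih =>
  rw [or_iff_not_imp_right]
  intro hnot
  rcases hij.eq_or_lt with rfl | hij
  · exact MulAction.mem_orbit_self _
  obtain ⟨a, ha, ha'⟩ := Set.not_subset.1 hnot
  obtain ⟨hmem, hnew⟩ := hstr j hj ⟨a, Set.mem_biUnion hij ha, ha'⟩
  obtain ⟨t, htj, hjt⟩ := Set.mem_iUnion₂.1 hmem
  rw [← MulAction.orbit_eq_iff, MulAction.orbit_eq_iff.2 (mem_orbit_of_mem_sstOrbit hjt)]
  rcases le_total i t with hit | hti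
  · refine MulAction.orbit_eq_iff.2 ((ih t htj hit (htj.trans hj)).resolve_right fun h => hnot ?_)
    exact h.trans (Set.image_mono (Set.Iio_subset_Iio htj.le))
  · refine (MulAction.orbit_eq_iff.2 ((ih i hij hti (hij.trans hj)).resolve_right fun h => ?_)).symm
    exact hnew (Set.image_mono (Set.Iio_subset_Iio hij.le) (h hjt))

theorem mem_orbit_or_fixed_of_stringent
    (hstr : sstStringent (Γ : Set (Equiv.Perm α)) ℓ k) (hij : i ≤ j) (hj : j < k)
    (hp : p ∈ sstOrbit (Γ : Set _) ℓ i) (hq : q ∈ sstOrbit (Γ : Set _) ℓ j) :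
    q ∈ MulAction.orbit Γ p ∨ ∀ γ ∈ sstChain (Γ : Set _) ℓ j, γ p = p := by
  rcases leader_mem_orbit_or_sstOrbit_subset_of_stringent hstr hij hj with h | h
  · left
    rw [← MulAction.orbit_eq_iff] at h ⊢
    rw [MulAction.orbit_eq_iff.2 (mem_orbit_of_mem_sstOrbit hq), h,
      MulAction.orbit_eq_iff.2 (mem_orbit_of_mem_sstOrbit hp)]
  · exact .inr fun γ hγ => apply_eq_self_of_mem_sstChain hγ (h hp)

end StabilizerChain

section Deletion

variable {V : Type*} {G : SimpleGraph V} {Γ : Set (Equiv.Perm V)} {ℓ : ℕ → V} {v : V}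

theorem mem_sstKeep_iff {i : ℕ} :
    v ∈ sstKeep G Γ ℓ i ↔ ∀ j < i, ¬ (v ∈ sstOrbit Γ ℓ j ∧ G.Adj v (ℓ j)) := by
  induction i with
  | zero => simp [sstKeep]
  | succ i ih => rw [sstKeep, Set.mem_sdiff, ih, Nat.forall_lt_succ_right, Set.mem_ofPred_eq]

theorem mem_sstDeleted_iff {k : ℕ} :
    v ∈ sstDeleted G Γ ℓ k ↔ ∃ i < k, v ∈ sstOrbit Γ ℓ i ∧ G.Adj v (ℓ i) := by
  classical
  refine ⟨fun ⟨i, hi, _, h⟩ => ⟨i, hi, h⟩, fun ⟨i, hi, h⟩ => ?_⟩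
  have hex : ∃ j, v ∈ sstOrbit Γ ℓ j ∧ G.Adj v (ℓ j) := ⟨i, h⟩
  exact ⟨Nat.find hex, (Nat.find_min' hex h).trans_lt hi,
    mem_sstKeep_iff.2 fun _ => Nat.find_min hex, Nat.find_spec hex⟩

end Deletion

section TwinSymmetric

variable {V : Type*}

/-- The weight-preserving automorphisms `autSet G c` as a subgroup of the permutations. -/
def autSubgroup (G : SimpleGraph V) (c : V → ℤ) : Subgroup (Equiv.Perm V) where
  carrier := autSet G c
  one_mem' := ⟨fun _ _ => Iff.rfl, fun _ => rfl⟩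
  mul_mem' {a b} ha hb :=
    ⟨fun u v => (ha.1 (b u) (b v)).trans (hb.1 u v), fun v => (ha.2 (b v)).trans (hb.2 v)⟩
  inv_mem' {a} ha :=
    ⟨fun u v => (ha.1 _ _).symm.trans (by simp), fun v => (ha.2 _).symm.trans (by simp)⟩

variable [DecidableEq V]

/-- `Γ` is a group of automorphisms of `G` that contains the transposition of any two twins lying
in a common `Γ`-orbit. -/
structure IsTwinSymmetric (G : SimpleGraph V) (Γ : Subgroup (Equiv.Perm V)) : Prop where
  adj_iff : ∀ γ ∈ Γ, ∀ u v, G.Adj (γ u) (γ v) ↔ G.Adj u v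
  swap_mem : ∀ u v, closedNbhd G u = closedNbhd G v → v ∈ MulAction.orbit Γ u →
    Equiv.swap u v ∈ Γ

theorem isTwinSymmetric_autSubgroup (G : SimpleGraph V) (c : V → ℤ) :
    IsTwinSymmetric G (autSubgroup G c) where
  adj_iff _ hγ := hγ.1
  swap_mem u v htwins horbit := by
    have hweight : c v = c u := by
      obtain ⟨⟨γ, hγ⟩, rfl⟩ := horbit
      exact hγ.2 u
    exact ⟨adj_swap_iff_of_twins htwins, fun w => by grind⟩

end TwinSymmetric

section ActiveNodes

variable {V : Type*} {G : SimpleGraph V} {Γ : Subgroup (Equiv.Perm V)} {ℓ : ℕ → V}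
  {i k : ℕ} {p q u : V}

/-- The nodes in an orbit `O_j` that is not a clique; these are packed first. -/
def activeNodes (G : SimpleGraph V) (Γ : Set (Equiv.Perm V)) (ℓ : ℕ → V) (k : ℕ) : Set V :=
  {v | ∃ j < k, v ∈ sstOrbit Γ ℓ j ∧ ¬ G.IsClique (sstOrbit Γ ℓ j)}

theorem mem_activeNodes_of_not_adj {Γ : Set (Equiv.Perm V)} (hi : i < k)
    (hp : p ∈ sstOrbit Γ ℓ i) (hq : q ∈ sstOrbit Γ ℓ i) (hpq : p ≠ q) (hadj : ¬ G.Adj p q) :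
    p ∈ activeNodes G Γ ℓ k :=
  ⟨i, hi, hp, fun hclique => hadj (hclique hp hq hpq)⟩

variable [DecidableEq V]

theorem IsTwinSymmetric.closedNbhd_apply_subset_apply (hΓ : IsTwinSymmetric G Γ)
    {γ : Equiv.Perm V} (hγ : γ ∈ Γ) (h : closedNbhd G p ⊆ closedNbhd G u) :
    closedNbhd G (γ p) ⊆ closedNbhd G (γ u) := by
  rw [closedNbhd_apply (hΓ.adj_iff γ hγ), closedNbhd_apply (hΓ.adj_iff γ hγ)]
  exact Set.image_mono h

theorem IsTwinSymmetric.ncard_closedNbhd_eq (hΓ : IsTwinSymmetric G Γ)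
    (h : u ∈ MulAction.orbit Γ p) : (closedNbhd G u).ncard = (closedNbhd G p).ncard := by
  obtain ⟨⟨γ, hγ⟩, rfl⟩ := h
  change (closedNbhd G (γ p)).ncard = _
  rw [closedNbhd_apply (hΓ.adj_iff γ hγ), Set.ncard_image_of_injective _ γ.injective]

theorem IsTwinSymmetric.isClique_sstOrbit_of_fixed (hΓ : IsTwinSymmetric G Γ)
    (hfixed : ∀ γ ∈ sstChain (Γ : Set _) ℓ i, γ p = p) (hu : u ∈ sstOrbit (Γ : Set _) ℓ i)
    (hpu : closedNbhd G p ⊆ closedNbhd G u) : G.IsClique (sstOrbit (Γ : Set _) ℓ i) := by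
  have dominates {w : V} (hw : w ∈ sstOrbit (Γ : Set _) ℓ i) :
      closedNbhd G p ⊆ closedNbhd G w := by
    obtain ⟨γ, hγ, rfl⟩ := exists_mem_sstChain_apply_eq hu hw
    simpa only [hfixed γ hγ] using
      hΓ.closedNbhd_apply_subset_apply (mem_sstChain_iff.1 hγ).1 hpu
  exact fun a ha b hb => adj_of_closedNbhd_subset_of_subset (dominates ha) (dominates hb)

theorem IsTwinSymmetric.closedNbhd_subset_of_fixed (hΓ : IsTwinSymmetric G Γ)
    (hfixed : ∀ γ ∈ sstChain (Γ : Set _) ℓ i, γ u = u) (hp : p ∈ sstOrbit (Γ : Set _) ℓ i)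
    (hq : q ∈ sstOrbit (Γ : Set _) ℓ i) (hpu : closedNbhd G p ⊆ closedNbhd G u) :
    closedNbhd G q ⊆ closedNbhd G u := by
  obtain ⟨γ, hγ, rfl⟩ := exists_mem_sstChain_apply_eq hp hq
  simpa only [hfixed γ hγ] using
    hΓ.closedNbhd_apply_subset_apply (mem_sstChain_iff.1 hγ).1 hpu

theorem IsTwinSymmetric.mem_orbit_or_closedNbhd_subset (hΓ : IsTwinSymmetric G Γ)
    (hstr : sstStringent (Γ : Set (Equiv.Perm V)) ℓ k) (hi : i < k)
    (hp : p ∈ sstOrbit (Γ : Set _) ℓ i) (hq : q ∈ sstOrbit (Γ : Set _) ℓ i)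
    (hu : u ∈ activeNodes G Γ ℓ k) (hpu : closedNbhd G p ⊆ closedNbhd G u) :
    u ∈ MulAction.orbit Γ p ∨ closedNbhd G q ⊆ closedNbhd G u := by
  obtain ⟨j, hj, huj, hclique⟩ := hu
  rcases le_total i j with hij | hji
  · exact (mem_orbit_or_fixed_of_stringent hstr hij hj hp huj).imp_right fun hfixed =>
      absurd (hΓ.isClique_sstOrbit_of_fixed hfixed huj hpu) hclique
  · exact (mem_orbit_or_fixed_of_stringent hstr hji hi huj hp).imp MulAction.mem_orbit_symm.1
      fun hfixed => hΓ.closedNbhd_subset_of_fixed hfixed hp hq hpu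

theorem IsTwinSymmetric.closedNbhd_ssubset_of_mem_sstOrbit [Finite V] (hΓ : IsTwinSymmetric G Γ)
    (hstr : sstStringent (Γ : Set (Equiv.Perm V)) ℓ k) (hi : i < k)
    (hp : p ∈ sstOrbit (Γ : Set _) ℓ i) (hq : q ∈ sstOrbit (Γ : Set _) ℓ i)
    (hu : u ∈ activeNodes G Γ ℓ k) (hpu : closedNbhd G p ⊂ closedNbhd G u) :
    closedNbhd G q ⊂ closedNbhd G u := by
  have hcard : (closedNbhd G p).ncard < (closedNbhd G u).ncard := Set.ncard_lt_ncard hpu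
  rcases hΓ.mem_orbit_or_closedNbhd_subset hstr hi hp hq hu hpu.subset with h | h
  · exact absurd (hΓ.ncard_closedNbhd_eq h) hcard.ne'
  · refine h.ssubset_of_ne fun hqu => hcard.ne ?_
    rw [← hqu, hΓ.ncard_closedNbhd_eq (mem_orbit_of_mem_sstOrbit hp),
      hΓ.ncard_closedNbhd_eq (mem_orbit_of_mem_sstOrbit hq)]

theorem IsTwinSymmetric.mem_sstOrbit_of_twin (hΓ : IsTwinSymmetric G Γ)
    (hp : p ∈ sstOrbit (Γ : Set _) ℓ i) (htwins : closedNbhd G p = closedNbhd G u)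
    (hu : u ∈ MulAction.orbit Γ p) (hpnew : p ∉ ℓ '' Set.Iio i) (hunew : u ∉ ℓ '' Set.Iio i) :
    u ∈ sstOrbit (Γ : Set _) ℓ i := by
  have hswap : Equiv.swap p u ∈ sstChain (Γ : Set _) ℓ i := mem_sstChain_iff.2
    ⟨hΓ.swap_mem p u htwins hu, fun j hj => Equiv.swap_apply_of_ne_of_ne
      (fun h => hpnew ⟨j, hj, h⟩) fun h => hunew ⟨j, hj, h⟩⟩
  simpa using apply_mem_sstOrbit hswap hp

theorem IsTwinSymmetric.mem_sstOrbit_or_mem_sstDeleted_of_twin (hΓ : IsTwinSymmetric G Γ)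
    (hi : i < k) (hp : p ∈ sstOrbit (Γ : Set _) ℓ i)
    (htwins : closedNbhd G p = closedNbhd G u) (hu : u ∈ MulAction.orbit Γ p)
    (hpnew : p ∉ ℓ '' Set.Iio i) :
    u ∈ sstOrbit (Γ : Set _) ℓ i ∨ p ∈ sstDeleted G Γ ℓ k := by
  classical
  by_cases hunew : u ∉ ℓ '' Set.Iio i
  · exact .inl (hΓ.mem_sstOrbit_of_twin hp htwins hu hpnew hunew)
  obtain ⟨j₀, hj₀, hj₀u⟩ := not_not.1 hunew
  have hex : ∃ j, ℓ j = u := ⟨j₀, hj₀u⟩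
  obtain ⟨j, hju, hfirst⟩ : ∃ j, ℓ j = u ∧ ∀ t < j, ℓ t ≠ u :=
    ⟨Nat.find hex, Nat.find_spec hex, fun t => Nat.find_min hex⟩
  have hji : j < i := (not_lt.1 fun h => hfirst j₀ h hj₀u).trans_lt hj₀
  have hpu : p ≠ u := fun h => hpnew ⟨j, hji, hju.trans h.symm⟩
  subst hju
  have hpj : p ∈ sstOrbit (Γ : Set _) ℓ j :=
    hΓ.mem_sstOrbit_of_twin (leader_mem_sstOrbit Γ ℓ j) htwins.symm (MulAction.mem_orbit_symm.1 hu)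
      (fun ⟨t, ht, h⟩ => hfirst t ht h)
      fun h => hpnew (Set.image_mono (Set.Iio_subset_Iio hji.le) h)
  exact .inr (mem_sstDeleted_iff.2
    ⟨j, hji.trans hi, hpj, adj_of_closedNbhd_subset htwins.subset hpu⟩)

theorem IsTwinSymmetric.active_twin_mem_sstOrbit (hΓ : IsTwinSymmetric G Γ)
    (hstr : sstStringent (Γ : Set (Equiv.Perm V)) ℓ k) (hi : i < k)
    (hp : p ∈ sstOrbit (Γ : Set _) ℓ i) (hq : q ∈ sstOrbit (Γ : Set _) ℓ i) (hpq : p ≠ q)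
    (hadj : ¬ G.Adj p q) (hpdel : p ∉ sstDeleted G Γ ℓ k) (hu : u ∈ activeNodes G Γ ℓ k)
    (htwins : closedNbhd G u = closedNbhd G p) : u ∈ sstOrbit (Γ : Set _) ℓ i := by
  have horbit : u ∈ MulAction.orbit Γ p := by
    refine (hΓ.mem_orbit_or_closedNbhd_subset hstr hi hp hq hu htwins.superset).resolve_right ?_
    exact fun h => hadj (adj_of_closedNbhd_subset (htwins ▸ h) hpq.symm).symm
  exact (hΓ.mem_sstOrbit_or_mem_sstDeleted_of_twin hi hp htwins.symm horbit
    (notMem_earlier_leaders_of_ne hp hq hpq)).resolve_right hpdel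

end ActiveNodes

section Relaxation

variable {V : Type*} {G : SimpleGraph V} {ℓ : ℕ → V} {k : ℕ} {x : V → ℝ}

/-- The polyhedron cut out by the box constraints, the maximal clique inequalities, the SST clique
cuts and the deletions. -/
def sstRelaxation (G : SimpleGraph V) (Γ : Set (Equiv.Perm V)) (ℓ : ℕ → V) (k : ℕ) :
    Set (V → ℝ) :=
  {x | (∀ v, 0 ≤ x v ∧ x v ≤ 1) ∧
    (∀ C : Finset V, G.IsClique (↑C : Set V) →
      (∀ C' : Finset V, G.IsClique (↑C' : Set V) → C ⊆ C' → C = C') → ∑ v ∈ C, x v ≤ 1) ∧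
    (∀ i < k, ∀ C : Finset V, G.IsClique (↑C : Set V) →
      (↑C : Set V) ⊆ sstOrbit Γ ℓ i \ {ℓ i} → ∑ f ∈ C, x f ≤ x (ℓ i)) ∧
    (∀ v ∈ sstDeleted G Γ ℓ k, x v = 0)}

theorem sum_le_one_of_mem_sstRelaxation [Finite V] {Γ : Set (Equiv.Perm V)}
    (hx : x ∈ sstRelaxation G Γ ℓ k) {C : Finset V} (hC : G.IsClique (C : Set V)) :
    ∑ v ∈ C, x v ≤ 1 := by
  obtain ⟨M, hCM, hM⟩ :=
    Finite.exists_le_maximal (p := fun C : Finset V => G.IsClique (C : Set V)) hC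
  calc ∑ v ∈ C, x v ≤ ∑ v ∈ M, x v :=
        sum_le_sum_of_subset_of_nonneg hCM fun v _ _ => (hx.1 v).1
    _ ≤ 1 := hx.2.1 M hM.prop fun C' hC' => hM.eq_of_le hC'

theorem convex_sstRelaxation (G : SimpleGraph V) (Γ : Set (Equiv.Perm V)) (ℓ : ℕ → V) (k : ℕ) :
    Convex ℝ (sstRelaxation G Γ ℓ k) := by
  have linear_eval (v : V) : IsLinearMap ℝ fun x : V → ℝ => x v := (LinearMap.proj v).isLinear
  have linear_sum (C : Finset V) : IsLinearMap ℝ fun x : V → ℝ => ∑ v ∈ C, x v :=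
    ⟨fun x y => by simp [sum_add_distrib], fun c x => by simp [mul_sum]⟩
  have linear_cut (C : Finset V) (v : V) :
      IsLinearMap ℝ fun x : V → ℝ => ∑ f ∈ C, x f - x v :=
    ((linear_sum C).mk' _ - (linear_eval v).mk' _).isLinear
  simp only [sstRelaxation, Set.ofPred_and, Set.ofPred_forall]
  refine .inter (convex_iInter fun v => ?_) (.inter ?_ (.inter ?_ ?_))
  · exact (convex_halfSpace_ge (linear_eval v) 0).inter (convex_halfSpace_le (linear_eval v) 1)
  · exact convex_iInter fun C => convex_iInter₂ fun _ _ => convex_halfSpace_le (linear_sum C) 1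
  · refine convex_iInter₂ fun i _ => convex_iInter fun C => convex_iInter₂ fun _ _ => ?_
    simpa only [sub_nonpos] using convex_halfSpace_le (linear_cut C (ℓ i)) 0
  · exact convex_iInter₂ fun v _ => convex_hyperplane (linear_eval v) 0

end Relaxation

section Indicator

variable {V : Type*} [DecidableEq V] {G : SimpleGraph V} {Γ : Set (Equiv.Perm V)} {ℓ : ℕ → V}
  {k : ℕ} {I C : Finset V} {u v : V}

theorem indic_nonneg (I : Finset V) (v : V) : 0 ≤ indic I v := by
  unfold indic
  positivity

theorem indic_le_one (I : Finset V) (v : V) : indic I v ≤ 1 := by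
  unfold indic
  split_ifs <;> norm_num

theorem indic_le_indic_iff : indic I u ≤ indic I v ↔ (u ∈ I → v ∈ I) := by
  unfold indic
  split_ifs <;> simp_all

theorem sum_indic_le_one (hI : IsStableSet G I) (hC : G.IsClique (C : Set V)) :
    ∑ v ∈ C, indic I v ≤ 1 := by
  have hsub : #(C ∩ I) ≤ 1 := card_le_one.2 fun a ha b hb => by
    obtain ⟨haC, haI⟩ := mem_inter.1 ha
    obtain ⟨hbC, hbI⟩ := mem_inter.1 hb
    by_contra hab
    exact hI a haI b hbI (hC haC hbC hab)
  simpa [indic] using hsub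

theorem sum_indic_le_indic (hI : IsStableSet G I) (hC : G.IsClique (C : Set V))
    (hv : ∀ u ∈ C, indic I u ≤ indic I v) : ∑ u ∈ C, indic I u ≤ indic I v := by
  by_cases hvI : v ∈ I
  · simpa [indic, hvI] using sum_indic_le_one hI hC
  · refine (sum_eq_zero fun u hu => ?_).trans_le (indic_nonneg I v)
    simpa [indic] using mt (indic_le_indic_iff.1 (hv u hu)) hvI

theorem indic_mem_sstRelaxation (hI : IsStableSet G I)
    (hcuts : ∀ p ∈ sstCuts Γ ℓ k, indic I p.2 ≤ indic I p.1) :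
    indic I ∈ sstRelaxation G Γ ℓ k := by
  refine ⟨fun v => ⟨indic_nonneg I v, indic_le_one I v⟩, fun C hC _ => sum_indic_le_one hI hC,
    fun i hi C hC hCO => ?_, ?_⟩
  · exact sum_indic_le_indic hI hC fun f hf =>
      hcuts (ℓ i, f) ⟨i, hi, rfl, (hCO hf).1, (hCO hf).2⟩
  · rintro v ⟨i, hi, -, hv, hadj⟩
    have hleader : v ∈ I → ℓ i ∈ I :=
      indic_le_indic_iff.1 (hcuts (ℓ i, v) ⟨i, hi, rfl, hv, hadj.ne⟩)
    have hvI : v ∉ I := fun hvI => hI v hvI (ℓ i) (hleader hvI) hadj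
    simp [indic, hvI]

theorem sstPolytope_subset_sstRelaxation (G : SimpleGraph V) (Γ : Set (Equiv.Perm V)) (ℓ : ℕ → V)
    (k : ℕ) : sstPolytope G (sstCuts Γ ℓ k) ⊆ sstRelaxation G Γ ℓ k := by
  refine convexHull_min ?_ (convex_sstRelaxation G Γ ℓ k)
  rintro _ ⟨I, hI, rfl, hcuts⟩
  exact indic_mem_sstRelaxation hI hcuts

end Indicator

section NestedPacking

variable {V : Type*} [Fintype V] [DecidableEq V] {G : SimpleGraph V}
  {Γ : Subgroup (Equiv.Perm V)} {ℓ : ℕ → V} {e : V → ℕ} {i k : ℕ} {x : V → ℝ} {p q f : V}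

theorem strictDominators_eq_of_mem_sstOrbit (hΓ : IsTwinSymmetric G Γ)
    (hstr : sstStringent (Γ : Set (Equiv.Perm V)) ℓ k) (hi : i < k)
    (hp : p ∈ sstOrbit (Γ : Set _) ℓ i) (hq : q ∈ sstOrbit (Γ : Set _) ℓ i) :
    strictDominators G (activeNodes G Γ ℓ k) p = strictDominators G (activeNodes G Γ ℓ k) q := by
  ext u
  simp only [mem_strictDominators]
  exact and_congr_right fun hu =>
    ⟨hΓ.closedNbhd_ssubset_of_mem_sstOrbit hstr hi hp hq hu,
      hΓ.closedNbhd_ssubset_of_mem_sstOrbit hstr hi hq hp hu⟩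

theorem sum_earlierTwins_leader_eq_zero (hΓ : IsTwinSymmetric G Γ)
    (hstr : sstStringent (Γ : Set (Equiv.Perm V)) ℓ k)
    (hx : ∀ v ∈ sstDeleted G Γ ℓ k, x v = 0) (hi : i < k) (hf : f ∈ sstOrbit (Γ : Set _) ℓ i)
    (hfl : f ≠ ℓ i) (hadj : ¬ G.Adj f (ℓ i)) (hleader : ℓ i ∉ sstDeleted G Γ ℓ k) :
    ∑ u ∈ earlierTwins G e (activeNodes G Γ ℓ k) (ℓ i), x u = 0 := by
  refine sum_eq_zero fun u hu => hx u ?_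
  obtain ⟨hactive, htwins, hlabel⟩ := mem_earlierTwins.1 hu
  have hne : u ≠ ℓ i := fun h => hlabel.ne (congrArg e h)
  have huO : u ∈ sstOrbit (Γ : Set _) ℓ i := hΓ.active_twin_mem_sstOrbit hstr hi
    (leader_mem_sstOrbit Γ ℓ i) hf hfl.symm (mt SimpleGraph.Adj.symm hadj) hleader hactive htwins
  exact mem_sstDeleted_iff.2 ⟨i, hi, huO, adj_of_closedNbhd_subset htwins.subset hne⟩

theorem insert_earlierTwins_subset_sstOrbit (hΓ : IsTwinSymmetric G Γ)
    (hstr : sstStringent (Γ : Set (Equiv.Perm V)) ℓ k) (hi : i < k)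
    (hf : f ∈ sstOrbit (Γ : Set _) ℓ i) (hfl : f ≠ ℓ i) (hadj : ¬ G.Adj f (ℓ i))
    (hfdel : f ∉ sstDeleted G Γ ℓ k) :
    (↑(insert f (earlierTwins G e (activeNodes G Γ ℓ k) f)) : Set V) ⊆
      sstOrbit (Γ : Set _) ℓ i \ {ℓ i} := by
  intro u hu
  rcases mem_insert.1 hu with rfl | hu
  · exact ⟨hf, hfl⟩
  obtain ⟨hactive, htwins, -⟩ := mem_earlierTwins.1 hu
  refine ⟨hΓ.active_twin_mem_sstOrbit hstr hi hf (leader_mem_sstOrbit Γ ℓ i) hfl hadj hfdel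
    hactive htwins, ?_⟩
  rintro rfl
  exact hadj (adj_of_closedNbhd_subset htwins.superset hfl)

/-- The intervals of `f` and `ℓ i` start with the same strict dominators; the remaining offset of
`f` is made up of twins in `O_i`, which the SST clique cut bounds together with `f` itself. -/
theorem packing_follower_nested (hG : HasNestedNbhds G) (he : Function.Injective e)
    (hΓ : IsTwinSymmetric G Γ) (hstr : sstStringent (Γ : Set (Equiv.Perm V)) ℓ k)
    (hx : x ∈ sstRelaxation G Γ ℓ k) (hi : i < k) (hf : f ∈ sstOrbit (Γ : Set _) ℓ i)
    (hfl : f ≠ ℓ i) (hxf : x f ≠ 0) :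
    packing G e (activeNodes G Γ ℓ k) x (ℓ i) ≤ packing G e (activeNodes G Γ ℓ k) x f ∧
      packing G e (activeNodes G Γ ℓ k) x f + x f ≤
        packing G e (activeNodes G Γ ℓ k) x (ℓ i) + x (ℓ i) := by
  obtain ⟨hbox, -, hcut, hdel⟩ := hx
  have hnonneg (v : V) : 0 ≤ x v := (hbox v).1
  have hL := leader_mem_sstOrbit Γ ℓ i
  have hfdel : f ∉ sstDeleted G Γ ℓ k := mt (hdel f) hxf
  have hadj : ¬ G.Adj f (ℓ i) := fun h => hfdel (mem_sstDeleted_iff.2 ⟨i, hi, hf, h⟩)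
  have hleader : ℓ i ∉ sstDeleted G Γ ℓ k := fun h => hxf <| by
    have hle : x f ≤ x (ℓ i) := by simpa using hcut i hi {f} (by simp) (by simpa using ⟨hf, hfl⟩)
    exact le_antisymm (hle.trans_eq (hdel _ h)) (hnonneg f)
  have hclique := hcut i hi _ isClique_insert_earlierTwins
    (insert_earlierTwins_subset_sstOrbit (e := e) hΓ hstr hi hf hfl hadj hfdel)
  rw [sum_insert (by simp [mem_earlierTwins])] at hclique
  have htwins : 0 ≤ ∑ u ∈ earlierTwins G e (activeNodes G Γ ℓ k) f, x u :=
    sum_nonneg fun u _ => hnonneg u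
  rw [packing_eq_of_mem hG he hnonneg (mem_activeNodes_of_not_adj hi hf hL hfl hadj),
    packing_eq_of_mem hG he hnonneg
      (mem_activeNodes_of_not_adj hi hL hf hfl.symm (mt SimpleGraph.Adj.symm hadj)),
    strictDominators_eq_of_mem_sstOrbit hΓ hstr hi hf hL,
    sum_earlierTwins_leader_eq_zero hΓ hstr hdel hi hf hfl hadj hleader]
  constructor <;> linarith

theorem indic_levelSet_packing_le_of_mem_sstCuts (hG : HasNestedNbhds G)
    (he : Function.Injective e) (hΓ : IsTwinSymmetric G Γ)
    (hstr : sstStringent (Γ : Set (Equiv.Perm V)) ℓ k) (hx : x ∈ sstRelaxation G Γ ℓ k) (θ : ℝ)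
    {p : V × V} (hp : p ∈ sstCuts Γ ℓ k) :
    indic (levelSet (packing G e (activeNodes G Γ ℓ k) x) x θ) p.2 ≤
      indic (levelSet (packing G e (activeNodes G Γ ℓ k) x) x θ) p.1 := by
  obtain ⟨i, hi, hleader, hf, hfl⟩ := hp
  refine indic_le_indic_iff.2 fun hmem => ?_
  obtain ⟨hstart, hend⟩ := mem_levelSet.1 hmem
  have hxf : x p.2 ≠ 0 := fun h => by linarith
  obtain ⟨hle, hle'⟩ := packing_follower_nested hG he hΓ hstr hx hi hf hfl hxf
  rw [hleader, mem_levelSet]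
  exact ⟨hle.trans hstart, hend.trans_le hle'⟩

end NestedPacking

section Description

variable {V : Type*} [Finite V] [DecidableEq V] {G : SimpleGraph V}
  {Γ : Subgroup (Equiv.Perm V)} {ℓ : ℕ → V} {k : ℕ}

theorem sstRelaxation_subset_sstPolytope (hG : HasNestedNbhds G) (hΓ : IsTwinSymmetric G Γ)
    (hstr : sstStringent (Γ : Set (Equiv.Perm V)) ℓ k) :
    sstRelaxation G Γ ℓ k ⊆ sstPolytope G (sstCuts Γ ℓ k) := by
  cases nonempty_fintype V
  intro x hx
  obtain ⟨e, he⟩ := Countable.exists_injective_nat V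
  exact mem_convexHull_of_forall_indic_levelSet_mem (fun v => (hx.1 v).1) packing_nonneg
    (packing_add_le_one hG he fun _ => sum_le_one_of_mem_sstRelaxation hx)
    fun θ => ⟨_, isStableSet_levelSet_packing hG he θ, rfl,
      fun _ => indic_levelSet_packing_le_of_mem_sstCuts hG he hΓ hstr hx θ⟩

theorem sstPolytope_triviallyPerfect_description_general (hG : TriviallyPerfect G)
    (hΓ : IsTwinSymmetric G Γ) (hstr : sstStringent (Γ : Set (Equiv.Perm V)) ℓ k) :
    sstPolytope G (sstCuts Γ ℓ k) = sstRelaxation G Γ ℓ k :=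
  (sstPolytope_subset_sstRelaxation G Γ ℓ k).antisymm
    (sstRelaxation_subset_sstPolytope hG.hasNestedNbhds hΓ hstr)

end Description

/-- For a trivially perfect graph and stringent SST cuts, `P(G,S)` is completely described
by box constraints, maximal clique inequalities, SST clique cuts, and setting the nodes
removed by the deletion operation to zero. -/
theorem sstPolytope_triviallyPerfect_description
    {V : Type*} [Fintype V] [DecidableEq V] (G : SimpleGraph V)
    (hTP : TriviallyPerfect G) (c : V → ℤ)
    (k : ℕ) (ℓ : ℕ → V) (hdist : ∀ i < k, ∀ j < k, ℓ i = ℓ j → i = j)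
    (hstr : sstStringent (autSet G c) ℓ k) :
    sstPolytope G (sstCuts (autSet G c) ℓ k)
      = {x : V → ℝ |
          (∀ v, 0 ≤ x v ∧ x v ≤ 1) ∧
          (∀ C : Finset V, G.IsClique (↑C : Set V) →
            (∀ C' : Finset V, G.IsClique (↑C' : Set V) → C ⊆ C' → C = C') →
            ∑ v ∈ C, x v ≤ 1) ∧
          (∀ i < k, ∀ C : Finset V, G.IsClique (↑C : Set V) →
            (↑C : Set V) ⊆ sstOrbit (autSet G c) ℓ i \ {ℓ i} →
            ∑ f ∈ C, x f ≤ x (ℓ i)) ∧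
          (∀ v ∈ sstDeleted G (autSet G c) ℓ k, x v = 0)} :=
  sstPolytope_triviallyPerfect_description_general (Γ := autSubgroup G c) hTP
    (isTwinSymmetric_autSubgroup G c) hstr
end

section
/- Let T = (V,A) be a finite out-tree rooted at r (a directed tree in which every node is reachable from r by a unique directed path). Say v is a predecessor of w if v ≠ w and there is a directed path from v to w in T. Let 𝔖 be a collection of pairwise disjoint subsets of V, each incomparable (no element of a set is a predecessor of another element of the same set), and suppose 𝔖 is predecessor preserving: for all distinct S_1, S_2 ∈ 𝔖, either no node of S_1 is a predecessor of any node of S_2, or every node v ∈ S_1 that is a predecessor of some node of S_2 is a predecessor of every node of S_2. Let ≻ be a strict total order on V. Then the matrix whose rows are (a) for every directed root-to-leaf path p of T, the incidence row (1 at each node on p, 0 elsewhere), and (b) for every S ∈ 𝔖 and every pair v, w ∈ S with v ≻ w, the row −e_v + e_w, is totally unimodular. -/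
/-!
An out-tree rooted at `r` is encoded by a parent function `parent : V → V` with
`parent r = r` and every node reaching `r` by iterating `parent`; the arcs are
`(parent w, w)` for `w ≠ r`, so every node is reachable from `r` by a unique
directed path.
-/

/-- `v` is a (strict) predecessor of `w` in the out-tree given by `parent`. -/
def treePred {V : Type*} (parent : V → V) (v w : V) : Prop :=
  v ≠ w ∧ ∃ n : ℕ, parent^[n] w = v

/-- Leaves of the out-tree: nodes with no child. -/
def LeafIdx {V : Type*} (parent : V → V) :=
  {u : V // ∀ w, parent w = u → w = u}

/-- Index set for the ordering rows: a set `S ∈ 𝔖` together with `v, w ∈ S`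
satisfying `v ≻ w`. -/
def OrdPairIdx {V : Type*} (𝔖 : Set (Set V)) (ord : V → V → Prop) :=
  {q : Set V × V × V // q.1 ∈ 𝔖 ∧ q.2.1 ∈ q.1 ∧ q.2.2 ∈ q.1 ∧ ord q.2.1 q.2.2}

open Classical in
/-- The path matrix of the out-tree (one row per root-to-leaf path, with a `1` exactly
at the nodes on the path, i.e. the ancestors of the leaf) extended by the rows
`-e_v + e_w` for `S ∈ 𝔖` and `v, w ∈ S` with `v ≻ w`. -/
noncomputable def pathOrderMatrix {V : Type*} (parent : V → V) (𝔖 : Set (Set V))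
    (ord : V → V → Prop) :
    Matrix (LeafIdx parent ⊕ OrdPairIdx 𝔖 ord) V ℤ :=
  fun row v =>
    match row with
    | Sum.inl u => if ∃ n : ℕ, parent^[n] u.1 = v then 1 else 0
    | Sum.inr q => if v = q.1.2.1 then -1 else if v = q.1.2.2 then 1 else 0

/-!
By Ghouila-Houri's criterion it suffices to sign every finite set `C` of columns so that all
signed row sums lie in `{-1, 0, 1}`. Put `U = ⋃₀ 𝔖`, and let the signs alternate along every path
within `C ∩ U`, starting with `+1`, and within `C \ U`, starting with `-1`. Along a path the two
parts contribute `0` or `1` and `0` or `-1`. Two nodes of a common `S ∈ 𝔖` have the same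
predecessors in `U`, hence the same sign, so the ordering rows are balanced as well.
-/

section GhouilaHouri

open Matrix

variable {m n : Type*}

/-- Ghouila-Houri's condition: every finite set of columns can be signed so that the signed sum
of these columns has entries in `{-1, 0, 1}`. The signs outside `C` are irrelevant. -/
def HasBalancedSignings (A : Matrix m n ℤ) : Prop :=
  ∀ C : Finset n, ∃ ε : n → ℤˣ, ∀ i, |∑ j ∈ C, A i j * ε j| ≤ 1

namespace HasBalancedSignings

lemma submatrix {m' n' : Type*} {A : Matrix m n ℤ} (hA : HasBalancedSignings A) (f : m' → m)
    {g : n' → n} (hg : g.Injective) : HasBalancedSignings (A.submatrix f g) := by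
  intro C
  obtain ⟨ε, hε⟩ := hA (C.map ⟨g, hg⟩)
  exact ⟨ε ∘ g, fun i => by simpa using hε (f i)⟩

lemma exists_abs_mulVec_le_one [Fintype n] {A : Matrix m n ℤ} (hA : HasBalancedSignings A)
    {b : n → ℤ} (hb : ∀ j, |b j| ≤ 1) :
    ∃ y : n → ℤ, (∀ j, |y j| = |b j|) ∧ ∀ i, |(A *ᵥ y) i| ≤ 1 := by
  obtain ⟨ε, hε⟩ := hA {j | b j ≠ 0}
  refine ⟨fun j => if b j ≠ 0 then ε j else 0, fun j => ?_, fun i => ?_⟩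
  · have hεj : |(ε j : ℤ)| = 1 := Int.isUnit_iff_abs_eq.mp (ε j).isUnit
    rcases Int.abs_le_one_iff.mp (hb j) with h | h | h <;> simp [h, hεj]
  · simpa [mulVec, dotProduct, Finset.sum_filter] using hε i

end HasBalancedSignings

lemma mulVec_modEq_two_of_abs_eq [Fintype n] (A : Matrix m n ℤ) {x y : n → ℤ}
    (h : ∀ j, |x j| = |y j|) (i : m) : (A *ᵥ x) i ≡ (A *ᵥ y) i [ZMOD 2] := by
  refine Int.ModEq.sum fun j _ => Int.ModEq.mul_left _ ?_
  rcases abs_eq_abs.mp (h j) with hxy | hxy <;> grind [Int.ModEq]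

lemma mulVec_adjugate_col {R : Type*} [CommRing R] [Fintype n] [DecidableEq n]
    (B : Matrix n n R) (j : n) : B *ᵥ B.adjugate.col j = Pi.single j B.det := by
  rw [← mulVec_single_one, mulVec_mulVec, mul_adjugate, smul_mulVec, one_mulVec,
    ← Pi.single_smul, smul_eq_mul, mul_one]

lemma abs_adjugate_apply_le_one {k : ℕ} {B : Matrix (Fin (k + 1)) (Fin (k + 1)) ℤ}
    {i j : Fin (k + 1)} (h : |(B.submatrix j.succAbove i.succAbove).det| ≤ 1) :
    |B.adjugate i j| ≤ 1 := by
  simpa [adjugate_fin_succ_eq_det_submatrix, abs_mul] using h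

/- Let `b` be a column of the adjugate of `B`, so that `B b` is `det B` times a unit vector `e`.
Changing signs in `b` yields `y` with `B y ∈ {-1, 0, 1}ⁿ` and `B y ≡ B b` modulo `2`, so `B y = c e`
with `|c| ≤ 1`. Multiplying by the adjugate gives `(det B) y = c b`, where `y` and `b` agree up
to signs. -/
lemma HasBalancedSignings.abs_det_le_one {k : ℕ} {B : Matrix (Fin k) (Fin k) ℤ}
    (hB : HasBalancedSignings B) : |B.det| ≤ 1 := by
  induction k with
  | zero => simp
  | succ k ih =>
    by_cases hdet : B.det = 0
    · simp [hdet]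
    set b : Fin (k + 1) → ℤ := B.adjugate.col 0
    have hb_le : ∀ i, |b i| ≤ 1 := fun i =>
      abs_adjugate_apply_le_one (ih (hB.submatrix _ Fin.succAbove_right_injective))
    have hBb : B *ᵥ b = Pi.single 0 B.det := mulVec_adjugate_col B 0
    obtain ⟨y, hy_abs, hBy_le⟩ := hB.exists_abs_mulVec_le_one hb_le
    have hBy : B *ᵥ y = Pi.single 0 ((B *ᵥ y) 0) := by
      ext i
      rcases eq_or_ne i 0 with rfl | hi
      · simp
      · have hparity := mulVec_modEq_two_of_abs_eq B hy_abs i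
        rw [hBb, Pi.single_eq_of_ne hi] at hparity
        rw [Pi.single_eq_of_ne hi]
        have hbounds := abs_le.mp (hBy_le i)
        grind [Int.ModEq]
    have hdet_smul : B.det • y = (B *ᵥ y) 0 • b := by
      calc B.det • y = B.adjugate *ᵥ (B *ᵥ y) := by
            rw [mulVec_mulVec, adjugate_mul, smul_mulVec, one_mulVec]
        _ = (B *ᵥ y) 0 • b := by rw [hBy, mulVec_single, op_smul_eq_smul, Pi.single_eq_same]
    obtain ⟨i, hi⟩ : ∃ i, b i ≠ 0 := by
      by_contra! hb_zero
      rw [show b = 0 from funext hb_zero, mulVec_zero] at hBb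
      exact hdet (by simpa using (congrFun hBb 0).symm)
    have habs : |B.det| * |b i| = |(B *ᵥ y) 0| * |b i| := by
      simpa [abs_mul, hy_abs] using congrArg abs (congrFun hdet_smul i)
    rw [mul_right_cancel₀ (abs_ne_zero.mpr hi) habs]
    exact hBy_le 0

theorem HasBalancedSignings.isTotallyUnimodular {A : Matrix m n ℤ} (hA : HasBalancedSignings A) :
    A.IsTotallyUnimodular := by
  intro k f g _ hg
  rcases Int.abs_le_one_iff.mp (hA.submatrix f hg).abs_det_le_one with h | h | h <;> rw [h]
  exacts [⟨0, rfl⟩, ⟨1, rfl⟩, ⟨-1, rfl⟩]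

end GhouilaHouri

section AlternatingSigns

open scoped Finset

variable {α : Type*} [PartialOrder α]

lemma sum_card_filter_lt_eq_sum_range {M : Type*} [AddCommMonoid M] [DecidableLT α]
    {F : Finset α} (hF : IsChain (· ≤ ·) (F : Set α)) (f : ℕ → M) :
    ∑ v ∈ F, f #{u ∈ F | u < v} = ∑ i ∈ Finset.range #F, f i := by
  have hmono : ∀ v ∈ F, ∀ w, v < w → #{u ∈ F | u < v} < #{u ∈ F | u < w} := by
    intro v hv w hvw
    refine Finset.card_lt_card (Finset.ssubset_iff_of_subset ?_ |>.mpr ⟨v, by simp [hv, hvw]⟩)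
    exact Finset.monotone_filter_right _ fun u _ huv => huv.trans hvw
  have hinj : Set.InjOn (fun v => #{u ∈ F | u < v}) F := by
    intro v hv w hw hvw
    by_contra hne
    rcases hF hv hw hne with h | h
    · exact (hmono v hv w (h.lt_of_ne hne)).ne hvw
    · exact (hmono w hw v (h.lt_of_ne' hne)).ne' hvw
  have hmaps : Set.MapsTo (fun v => #{u ∈ F | u < v}) F (Finset.range #F) := by
    intro v hv
    rw [Finset.mem_coe, Finset.mem_range]
    exact Finset.card_lt_card (Finset.filter_ssubset.mpr ⟨v, hv, lt_irrefl v⟩)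
  exact Finset.sum_nbij _ hmaps hinj
    (Finset.surjOn_of_injOn_of_card_le _ hmaps hinj (by simp)) fun _ _ => rfl

open Classical in
/-- The sign of `v` determined by the parity of the number of elements of `D` below `v`; along a
chain in `D` that is closed downwards in `D` it alternates, starting with `1`. -/
noncomputable def alternatingSign (D : Finset α) (v : α) : ℤˣ :=
  (-1) ^ #{u ∈ D | u < v}

open Classical in
lemma sum_alternatingSign_mem_Icc (D : Finset α) {x : α}
    (hx : IsChain (· ≤ ·) (Set.Iic x)) :
    ∑ v ∈ D with v ≤ x, (alternatingSign D v : ℤ) ∈ Set.Icc 0 1 := by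
  set P : Finset α := {v ∈ D | v ≤ x} with hP
  have hchain : IsChain (· ≤ ·) (P : Set α) := hx.mono fun v hv => (Finset.mem_filter.mp hv).2
  have hsign : ∀ v ∈ P, (alternatingSign D v : ℤ) = (-1) ^ #{u ∈ P | u < v} := by
    intro v hv
    have hbelow : ({u ∈ D | u < v} : Finset α) = {u ∈ P | u < v} := by
      rw [hP, Finset.filter_filter]
      exact Finset.filter_congr fun u _ =>
        ⟨fun huv => ⟨huv.le.trans (Finset.mem_filter.mp hv).2, huv⟩, And.right⟩
    simp [alternatingSign, hbelow]
  rw [Finset.sum_congr rfl hsign,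
    sum_card_filter_lt_eq_sum_range hchain fun i => (-1 : ℤ) ^ i, neg_one_geom_sum]
  split_ifs <;> simp

open Classical in
/-- The signing of the finite set `C` that alternates upwards, starting with `1` on `C ∩ U` and
with `-1` on `C \ U`. -/
noncomputable def splitSign (C : Finset α) (U : Set α) (v : α) : ℤˣ :=
  if v ∈ U then alternatingSign {u ∈ C | u ∈ U} v else -alternatingSign {u ∈ C | u ∉ U} v

open Classical in
lemma abs_sum_splitSign_le_one (C : Finset α) (U : Set α) {x : α}
    (hx : IsChain (· ≤ ·) (Set.Iic x)) :
    |∑ v ∈ C with v ≤ x, (splitSign C U v : ℤ)| ≤ 1 := by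
  have hsplit : ∑ v ∈ C with v ≤ x, (splitSign C U v : ℤ) =
      ∑ v ∈ ({u ∈ C | u ∈ U} : Finset α) with v ≤ x, (alternatingSign {u ∈ C | u ∈ U} v : ℤ) -
      ∑ v ∈ ({u ∈ C | u ∉ U} : Finset α) with v ≤ x, (alternatingSign {u ∈ C | u ∉ U} v : ℤ) := by
    rw [← Finset.sum_filter_add_sum_filter_not _ (· ∈ U), sub_eq_add_neg,
      ← Finset.sum_neg_distrib, Finset.filter_comm, Finset.filter_comm (· ≤ x) (· ∉ U)]
    congr 1 <;> refine Finset.sum_congr rfl fun v hv => ?_ <;>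
      simp_all [splitSign]
  obtain ⟨h₁, h₁'⟩ := sum_alternatingSign_mem_Icc {u ∈ C | u ∈ U} hx
  obtain ⟨h₂, h₂'⟩ := sum_alternatingSign_mem_Icc {u ∈ C | u ∉ U} hx
  rw [hsplit, abs_le]
  constructor <;> linarith

lemma splitSign_congr (C : Finset α) {U : Set α} {v w : α} (hv : v ∈ U) (hw : w ∈ U)
    (h : ∀ u ∈ U, u < v ↔ u < w) : splitSign C U v = splitSign C U w := by
  classical
  simp only [splitSign, alternatingSign, hv, hw, if_true]
  rw [Finset.filter_congr fun u hu => h u (Finset.mem_filter.mp hu).2]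

end AlternatingSigns

section AncestorOrder

open Function

variable {V : Type*} {parent : V → V}

lemma periodicPts_subset_fixedPoints_of_reach {r : V} (hroot : parent r = r)
    (hreach : ∀ v, ∃ n : ℕ, parent^[n] v = r) : periodicPts parent ⊆ fixedPoints parent := by
  rintro v ⟨p, hp, hv⟩
  obtain ⟨n, hn⟩ := hreach v
  have hvr : v = r := by
    calc v = parent^[p * n] v := (hv.mul_const n).symm
      _ = parent^[p * n - n] (parent^[n] v) := by
          rw [← iterate_add_apply, Nat.sub_add_cancel (Nat.le_mul_of_pos_left n hp)]
      _ = r := by rw [hn, iterate_fixed hroot]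
  rwa [hvr]

lemma ancestor_antisymm (hacyclic : periodicPts parent ⊆ fixedPoints parent) {v w : V}
    (hvw : ∃ n : ℕ, parent^[n] w = v) (hwv : ∃ n : ℕ, parent^[n] v = w) : v = w := by
  obtain ⟨n, rfl⟩ := hvw
  obtain ⟨k, hk⟩ := hwv
  rcases n.eq_zero_or_pos with rfl | hn
  · rfl
  · have hper : w ∈ periodicPts parent :=
      ⟨k + n, by omega, by rwa [IsPeriodicPt, IsFixedPt, iterate_add_apply]⟩
    exact iterate_fixed (hacyclic hper) n

/-- The order on the nodes of an out-forest in which `v ≤ w` if `v` lies on the path to `w`. A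
parent function describes an out-forest, with its roots as fixed points, when it has no cycles
other than fixed points. -/
abbrev ancestorOrder (hacyclic : periodicPts parent ⊆ fixedPoints parent) : PartialOrder V where
  le v w := ∃ n : ℕ, parent^[n] w = v
  lt := treePred parent
  le_refl v := ⟨0, rfl⟩
  le_trans := by
    rintro _ _ w ⟨k, rfl⟩ ⟨n, rfl⟩
    exact ⟨k + n, iterate_add_apply parent k n w⟩
  le_antisymm _ _ := ancestor_antisymm hacyclic
  lt_iff_le_not_ge v w := by
    constructor
    · exact fun ⟨hne, hvw⟩ => ⟨hvw, fun hwv => hne (ancestor_antisymm hacyclic hvw hwv)⟩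
    · rintro ⟨hvw, hnot⟩
      exact ⟨fun h => hnot (h ▸ ⟨0, rfl⟩), hvw⟩

lemma isChain_Iic_ancestorOrder (hacyclic : periodicPts parent ⊆ fixedPoints parent) (x : V) :
    letI := ancestorOrder hacyclic
    IsChain (· ≤ ·) (Set.Iic x) := by
  rintro _ ⟨n, rfl⟩ _ ⟨k, rfl⟩ _
  rcases le_total n k with h | h
  · exact .inr ⟨k - n, by rw [← iterate_add_apply, Nat.sub_add_cancel h]⟩
  · exact .inl ⟨n - k, by rw [← iterate_add_apply, Nat.sub_add_cancel h]⟩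

end AncestorOrder

section PathOrderMatrix

variable {V : Type*} {parent : V → V} {𝔖 : Set (Set V)} {ord : V → V → Prop}

lemma treePred_of_mem_of_mem
    (hincomp : ∀ S ∈ 𝔖, ∀ v ∈ S, ∀ w ∈ S, ¬ treePred parent v w)
    (hpp : ∀ S₁ ∈ 𝔖, ∀ S₂ ∈ 𝔖, S₁ ≠ S₂ →
      (∀ v ∈ S₁, ∀ w ∈ S₂, ¬ treePred parent v w) ∨
      (∀ v ∈ S₁, (∃ w ∈ S₂, treePred parent v w) → ∀ w ∈ S₂, treePred parent v w))
    {u v w : V} {S : Set V} (hu : u ∈ ⋃₀ 𝔖) (hS : S ∈ 𝔖) (hv : v ∈ S) (hw : w ∈ S)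
    (huv : treePred parent u v) : treePred parent u w := by
  obtain ⟨S', hS', huS'⟩ := hu
  have hne : S' ≠ S := by
    rintro rfl
    exact hincomp S' hS' u huS' v hv huv
  rcases hpp S' hS' S hS hne with hnone | hall
  · exact absurd huv (hnone u huS' v hv)
  · exact hall u huS' ⟨v, hv, huv⟩ w hw

open Classical in
lemma sum_pathOrderMatrix_inl_mul (C : Finset V) (u : LeafIdx parent) (y : V → ℤ) :
    ∑ j ∈ C, pathOrderMatrix parent 𝔖 ord (Sum.inl u) j * y j =
      ∑ j ∈ C with ∃ n : ℕ, parent^[n] u.1 = j, y j := by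
  simp [pathOrderMatrix, Finset.sum_filter]

open Classical in
lemma sum_pathOrderMatrix_inr_mul [Std.Irrefl ord] (C : Finset V) (q : OrdPairIdx 𝔖 ord)
    (y : V → ℤ) :
    ∑ j ∈ C, pathOrderMatrix parent 𝔖 ord (Sum.inr q) j * y j =
      (if q.1.2.2 ∈ C then y q.1.2.2 else 0) - (if q.1.2.1 ∈ C then y q.1.2.1 else 0) := by
  have hne : q.1.2.1 ≠ q.1.2.2 := fun h => irrefl_of ord q.1.2.2 (h ▸ q.2.2.2.2)
  have hentry : ∀ j, pathOrderMatrix parent 𝔖 ord (Sum.inr q) j * y j =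
      (if j = q.1.2.2 then y j else 0) - (if j = q.1.2.1 then y j else 0) := by
    intro j
    simp only [pathOrderMatrix]
    grind
  simp only [hentry, Finset.sum_sub_distrib, Finset.sum_ite_eq']

theorem pathOrderMatrix_isTotallyUnimodular_general
    (hacyclic : Function.periodicPts parent ⊆ Function.fixedPoints parent)
    (hincomp : ∀ S ∈ 𝔖, ∀ v ∈ S, ∀ w ∈ S, ¬ treePred parent v w)
    (hpp : ∀ S₁ ∈ 𝔖, ∀ S₂ ∈ 𝔖, S₁ ≠ S₂ →
      (∀ v ∈ S₁, ∀ w ∈ S₂, ¬ treePred parent v w) ∨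
      (∀ v ∈ S₁, (∃ w ∈ S₂, treePred parent v w) → ∀ w ∈ S₂, treePred parent v w))
    [Std.Irrefl ord] :
    (pathOrderMatrix parent 𝔖 ord).IsTotallyUnimodular := by
  let _ := ancestorOrder hacyclic
  refine HasBalancedSignings.isTotallyUnimodular fun C => ⟨splitSign C (⋃₀ 𝔖), ?_⟩
  rintro (u | q)
  · rw [sum_pathOrderMatrix_inl_mul]
    exact abs_sum_splitSign_le_one C (⋃₀ 𝔖) (isChain_Iic_ancestorOrder hacyclic u.1)
  · rw [sum_pathOrderMatrix_inr_mul]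
    obtain ⟨⟨S, v, w⟩, hS, hv, hw, -⟩ := q
    have hsign : splitSign C (⋃₀ 𝔖) v = splitSign C (⋃₀ 𝔖) w :=
      splitSign_congr C ⟨S, hS, hv⟩ ⟨S, hS, hw⟩ fun u hu =>
        ⟨treePred_of_mem_of_mem hincomp hpp hu hS hv hw,
          treePred_of_mem_of_mem hincomp hpp hu hS hw hv⟩
    rw [hsign]
    rcases Int.units_eq_one_or (splitSign C (⋃₀ 𝔖) w) with h | h <;> rw [h] <;>
      split_ifs <;> simp

end PathOrderMatrix

/-- For a predecessor-preserving collection `𝔖` of pairwise disjoint incomparable node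
sets of an out-tree and a strict total order `≻`, the path matrix extended by the rows
`-e_v + e_w` (for `v, w` in a common member of `𝔖` with `v ≻ w`) is totally unimodular. -/
theorem pathOrderMatrix_isTotallyUnimodular
    {V : Type*} [Fintype V] [DecidableEq V] (r : V) (parent : V → V)
    (hroot : parent r = r) (hreach : ∀ v, ∃ n : ℕ, parent^[n] v = r)
    (𝔖 : Set (Set V))
    (hdisj : ∀ S₁ ∈ 𝔖, ∀ S₂ ∈ 𝔖, S₁ ≠ S₂ → Disjoint S₁ S₂)
    (hincomp : ∀ S ∈ 𝔖, ∀ v ∈ S, ∀ w ∈ S, ¬ treePred parent v w)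
    (hpp : ∀ S₁ ∈ 𝔖, ∀ S₂ ∈ 𝔖, S₁ ≠ S₂ →
      (∀ v ∈ S₁, ∀ w ∈ S₂, ¬ treePred parent v w) ∨
      (∀ v ∈ S₁, (∃ w ∈ S₂, treePred parent v w) → ∀ w ∈ S₂, treePred parent v w))
    (ord : V → V → Prop) (hord : IsStrictTotalOrder V ord) :
    (pathOrderMatrix parent 𝔖 ord).IsTotallyUnimodular := by
  have : Std.Irrefl ord := hord.toIsStrictOrder.toIrrefl
  exact pathOrderMatrix_isTotallyUnimodular_general
    (periodicPts_subset_fixedPoints_of_reach hroot hreach) hincomp hpp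
end
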